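/- ₂F₁(a+1/2, 1/2−a; 1−a; (1−√2)/2) = √π · 2^{2a−1/4} (√2−1)^{a} Γ(1−a) / (Γ(5/8 − a/2) Γ(7/8 − a/2)) for every real a with a < 1/2 and a not a nonpositive... with 1−a not a nonpositive integer (e.g. for all real a < 1/2). -/

import Mathlib

noncomputable def poch (a : ℝ) (n : ℕ) : ℝ := ∏ i ∈ Finset.range n, (a + i)

open MeasureTheory Set Filter Topology

lemma poch_succ (a : ℝ) (n : ℕ) : poch a (n + 1) = poch a n * (a + n) :=
  Finset.prod_range_succ _ _

lemma poch_pos {a : ℝ} (ha : 0 < a) (n : ℕ) : 0 < poch a n :=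
  Finset.prod_pos fun _ _ => by positivity

lemma Gamma_add_nat {a : ℝ} (ha : 0 < a) (n : ℕ) :
    Real.Gamma (a + n) = poch a n * Real.Gamma a := by
  induction n with
  | zero => simp [poch]
  | succ n ih =>
    rw [Nat.cast_succ, ← add_assoc, Real.Gamma_add_one (by positivity), ih, poch_succ]
    ring

lemma poch_eq_ascPochhammer_eval (a : ℝ) (n : ℕ) : poch a n = (ascPochhammer ℝ n).eval a := by
  induction n with
  | zero => simp [poch]
  | succ n ih => rw [poch_succ, ih, ascPochhammer_succ_eval]

/-- The binomial series with exponent `-a`. -/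
lemma hasSum_poch_mul_pow (a : ℝ) {x : ℝ} (hx : |x| < 1) :
    HasSum (fun n => poch a n / n.factorial * x ^ n) ((1 - x) ^ (-a)) := by
  have h := (Real.one_div_one_sub_rpow_hasFPowerSeriesOnBall_zero a).hasSum (y := x)
    (by simpa [Metric.eball_ofReal, ← ENNReal.ofReal_one] using hx)
  rw [zero_add, one_div, ← Real.rpow_neg (by linarith [(abs_lt.1 hx).2])] at h
  have hc (n : ℕ) : Ring.choose (a + n - 1) n = poch a n / n.factorial := by
    rw [Ring.choose_eq_smul,
    Polynomial.descPochhammer_smeval_eq_ascPochhammer, Polynomial.ascPochhammer_smeval_cast,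
    Polynomial.ascPochhammer_smeval_eq_eval, poch_eq_ascPochhammer_eval, smul_eq_mul]
    ring_nf
  simpa only [FormalMultilinearSeries.ofScalars_apply_eq, smul_eq_mul, hc] using h

/-- Euler's beta integral over the open unit interval. -/
lemma integral_Ioo_rpow_mul_rpow {u v : ℝ} (hu : 0 < u) (hv : 0 < v) :
    ∫ t in Ioo (0 : ℝ) 1, t ^ (u - 1) * (1 - t) ^ (v - 1) = ProbabilityTheory.beta u v := by
  rw [ProbabilityTheory.beta_eq_betaIntegralReal u v hu hv, Complex.betaIntegral,
    intervalIntegral.integral_of_le (by norm_num), ← integral_Ioc_eq_integral_Ioo,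
    ← RCLike.re_to_complex, ← integral_re]
  · refine setIntegral_congr_fun measurableSet_Ioc fun x ⟨hx1, hx₂⟩ ↦ ?_
    norm_cast
    rw [← Complex.ofReal_cpow, ← Complex.ofReal_cpow, RCLike.re_to_complex,
      Complex.re_mul_ofReal, Complex.ofReal_re]
    all_goals linarith
  · convert! Complex.betaIntegral_convergent (u := u) (v := v) (by simpa) (by simpa)
    rw [intervalIntegrable_iff_integrableOn_Ioc_of_le (by simp), IntegrableOn]

lemma integrableOn_Ioo_rpow_mul_rpow {u v : ℝ} (hu : 0 < u) (hv : 0 < v) :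
    IntegrableOn (fun t : ℝ => t ^ (u - 1) * (1 - t) ^ (v - 1)) (Ioo 0 1) :=
  Integrable.of_integral_ne_zero <| by
    rw [integral_Ioo_rpow_mul_rpow hu hv]
    exact (ProbabilityTheory.beta_pos hu hv).ne'

lemma beta_add_nat {u v : ℝ} (hu : 0 < u) (hv : 0 < v) (n : ℕ) :
    ProbabilityTheory.beta (u + n) v =
      poch u n / poch (u + v) n * ProbabilityTheory.beta u v := by
  have h := poch_pos (add_pos hu hv) n
  have h' := Real.Gamma_pos_of_pos (add_pos hu hv)
  rw [ProbabilityTheory.beta, ProbabilityTheory.beta, Gamma_add_nat hu,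
    show u + n + v = u + v + n by ring, Gamma_add_nat (add_pos hu hv)]
  field_simp

/-- Euler's integral representation of the Gauss hypergeometric series. -/
lemma hasSum_hypergeometric_mul_beta (a : ℝ) {u v w : ℝ} (hu : 0 < u) (hv : 0 < v) (hw : |w| < 1) :
    HasSum (fun n : ℕ => poch a n * poch u n / (poch (u + v) n * n.factorial) * w ^ n *
        ProbabilityTheory.beta u v)
      (∫ t in Ioo (0 : ℝ) 1, t ^ (u - 1) * (1 - t) ^ (v - 1) * (1 - w * t) ^ (-a)) := by
  have hint := integrableOn_Ioo_rpow_mul_rpow hu hv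
  have hs : Summable fun n : ℕ => |poch a n / n.factorial * w ^ n| :=
    (hasSum_poch_mul_pow a hw).summable.abs
  have key := hasSum_integral_of_dominated_convergence (μ := volume.restrict (Ioo (0 : ℝ) 1))
    (F := fun (n : ℕ) t => t ^ (u - 1) * (1 - t) ^ (v - 1) *
      (poch a n / n.factorial * (w * t) ^ n))
    (f := fun t => t ^ (u - 1) * (1 - t) ^ (v - 1) * (1 - w * t) ^ (-a))
    (fun n t => t ^ (u - 1) * (1 - t) ^ (v - 1) * |poch a n / n.factorial * w ^ n|)
    ?_ ?_ ?_ ?_ ?_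
  · have h (n : ℕ) : ∀ t ∈ Ioo (0 : ℝ) 1, t ^ (u - 1) * (1 - t) ^ (v - 1) *
        (poch a n / n.factorial * (w * t) ^ n) =
        poch a n / n.factorial * w ^ n * (t ^ (u + n - 1) * (1 - t) ^ (v - 1)) := fun t ht => by
      rw [show u + n - 1 = u - 1 + n by ring, Real.rpow_add_natCast ht.1.ne', mul_pow]
      ring
    have h' (n : ℕ) : ∫ t in Ioo (0 : ℝ) 1, t ^ (u - 1) * (1 - t) ^ (v - 1) *
        (poch a n / n.factorial * (w * t) ^ n) =
        poch a n * poch u n / (poch (u + v) n * n.factorial) * w ^ n *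
          ProbabilityTheory.beta u v := by
      rw [setIntegral_congr_fun measurableSet_Ioo (h n), integral_const_mul,
        integral_Ioo_rpow_mul_rpow (by positivity) hv, beta_add_nat hu hv]
      ring
    simpa only [h'] using key
  · intro n
    exact Measurable.aestronglyMeasurable (by fun_prop)
  · intro n
    refine ae_restrict_of_forall_mem measurableSet_Ioo fun t ht => ?_
    have h1 : 0 ≤ t ^ (u - 1) := Real.rpow_nonneg ht.1.le _
    have h2 : 0 ≤ (1 - t) ^ (v - 1) := Real.rpow_nonneg (by linarith [ht.2]) _
    rw [Real.norm_eq_abs, abs_mul, abs_of_nonneg (mul_nonneg h1 h2), mul_pow, ← mul_assoc _ (w ^ n),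
      abs_mul _ (t ^ n)]
    refine mul_le_mul_of_nonneg_left ?_ (mul_nonneg h1 h2)
    refine mul_le_of_le_one_right (abs_nonneg _) ?_
    rw [abs_of_nonneg (pow_nonneg ht.1.le n)]
    exact pow_le_one₀ ht.1.le ht.2.le
  · exact Eventually.of_forall fun t => hs.mul_left _
  · simp_rw [tsum_mul_left]
    exact hint.mul_const _
  · refine ae_restrict_of_forall_mem measurableSet_Ioo fun t ht => ?_
    refine (hasSum_poch_mul_pow a ?_).mul_left _
    rw [abs_mul, abs_of_pos ht.1]
    nlinarith [ht.1, ht.2, abs_nonneg w]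

/-- The integral of `cos θ ^ (u - 1) * cos (y * θ)` over the first quadrant. -/
noncomputable def cosIntegral (y u : ℝ) : ℝ :=
  ∫ θ in Ioo 0 (Real.pi / 2), Real.cos θ ^ (u - 1) * Real.cos (y * θ)

lemma cos_pos_of_mem_Ioo {θ : ℝ} (hθ : θ ∈ Ioo 0 (Real.pi / 2)) : 0 < Real.cos θ :=
  Real.cos_pos_of_mem_Ioo ⟨by linarith [hθ.1, Real.pi_pos], hθ.2⟩

lemma integrableOn_cos_rpow {u : ℝ} (hu : 0 < u) :
    IntegrableOn (fun θ => Real.cos θ ^ (u - 1)) (Ioo 0 (Real.pi / 2)) := by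
  have hpi := Real.pi_pos
  have h1 : IntegrableOn (fun θ : ℝ => (1 - 2 / Real.pi * θ) ^ (u - 1)) (Ioo 0 (Real.pi / 2)) := by
    rw [← intervalIntegrable_iff_integrableOn_Ioo_of_le (by positivity)]
    have h := ((intervalIntegral.intervalIntegrable_rpow' (a := 1) (b := 0) (r := u - 1)
      (by linarith)).comp_sub_left 1).comp_mul_left (c := 2 / Real.pi)
    convert h using 1 <;> field_simp <;> ring
  have h2 : IntegrableOn (fun _ : ℝ => (1 : ℝ)) (Ioo 0 (Real.pi / 2)) := by simp
  refine Integrable.mono' (h1.add h2) (Measurable.aestronglyMeasurable (by fun_prop))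
    (ae_restrict_of_forall_mem measurableSet_Ioo fun θ hθ => ?_)
  have hc := cos_pos_of_mem_Ioo hθ
  have hl := Real.one_sub_mul_le_cos hθ.1.le hθ.2.le
  have h0 : 0 < 1 - 2 / Real.pi * θ := by
    have : 2 / Real.pi * θ < 2 / Real.pi * (Real.pi / 2) := by gcongr; exact hθ.2
    field_simp at this ⊢
    linarith
  rw [Real.norm_of_nonneg (by positivity), Pi.add_apply]
  rcases le_total 1 u with h | h
  · linarith [Real.rpow_le_one hc.le (Real.cos_le_one θ) (by linarith : 0 ≤ u - 1),
      Real.rpow_nonneg h0.le (u - 1)]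
  · linarith [Real.rpow_le_rpow_of_nonpos h0 hl (by linarith : u - 1 ≤ 0)]

lemma integrableOn_cos_rpow_mul_cos (y : ℝ) {u : ℝ} (hu : 0 < u) :
    IntegrableOn (fun θ => Real.cos θ ^ (u - 1) * Real.cos (y * θ)) (Ioo 0 (Real.pi / 2)) :=
  Integrable.mono' (integrableOn_cos_rpow hu) (Measurable.aestronglyMeasurable (by fun_prop))
    (ae_restrict_of_forall_mem measurableSet_Ioo fun θ hθ => by
      have := Real.rpow_nonneg (cos_pos_of_mem_Ioo hθ).le (u - 1)
      rw [norm_mul, Real.norm_of_nonneg this]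
      exact mul_le_of_le_one_right this (Real.abs_cos_le_one _))

lemma cosIntegral_add_two (y : ℝ) {u : ℝ} (hu : 0 < u) :
    ((u + 1) ^ 2 - y ^ 2) * cosIntegral y (u + 2) = (u + 1) * u * cosIntegral y u := by
  have hpi : (0 : ℝ) ≤ Real.pi / 2 := by positivity
  have hint := ((integrableOn_cos_rpow_mul_cos y hu).const_mul ((u + 1) * u)).sub
    ((integrableOn_cos_rpow_mul_cos y (by linarith : 0 < u + 2)).const_mul ((u + 1) ^ 2 - y ^ 2))
  have ftc := intervalIntegral.integral_eq_sub_of_hasDerivAt_of_le hpi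
    (f := fun θ => -(u + 1) * Real.cos θ ^ u * Real.sin θ * Real.cos (y * θ) +
      y * Real.cos θ ^ (u + 1) * Real.sin (y * θ))
    (f' := fun θ => (u + 1) * u * (Real.cos θ ^ (u - 1) * Real.cos (y * θ)) -
      ((u + 1) ^ 2 - y ^ 2) * (Real.cos θ ^ (u + 2 - 1) * Real.cos (y * θ)))
    ?_ ?_ (by
      rw [intervalIntegrable_iff_integrableOn_Ioo_of_le hpi]; exact hint)
  · rw [intervalIntegral.integral_of_le hpi, integral_Ioc_eq_integral_Ioo,
      integral_sub ((integrableOn_cos_rpow_mul_cos y hu).const_mul _)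
        ((integrableOn_cos_rpow_mul_cos y (by linarith)).const_mul _),
      integral_const_mul, integral_const_mul] at ftc
    simp only [Real.cos_pi_div_two, Real.sin_zero, mul_zero, Real.zero_rpow hu.ne',
      Real.zero_rpow (by linarith : u + 1 ≠ 0), zero_mul, add_zero, sub_zero] at ftc
    unfold cosIntegral
    linarith
  · have h1 : Continuous fun θ => Real.cos θ ^ u :=
      Real.continuous_cos.rpow_const fun _ => Or.inr hu.le
    have h2 : Continuous fun θ => Real.cos θ ^ (u + 1) :=
      Real.continuous_cos.rpow_const fun _ => Or.inr (by linarith)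
    exact Continuous.continuousOn (by fun_prop)
  · intro θ hθ
    have hc := cos_pos_of_mem_Ioo hθ
    have hy : HasDerivAt (fun θ => y * θ) y θ := by simpa using (hasDerivAt_id θ).const_mul y
    have h1 := (Real.hasDerivAt_cos θ).rpow_const (p := u) (Or.inl hc.ne')
    have h2 := (Real.hasDerivAt_cos θ).rpow_const (p := u + 1) (Or.inl hc.ne')
    refine ((((h1.const_mul (-(u + 1))).mul (Real.hasDerivAt_sin θ)).mul hy.cos).add
      ((h2.const_mul y).mul hy.sin)).congr_deriv ?_
    simp only [Pi.mul_apply]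
    rw [show u + 2 - 1 = u - 1 + 1 + 1 by ring, show u + 1 - 1 = u - 1 + 1 by ring,
      show Real.cos θ ^ (u + 1) = Real.cos θ ^ (u - 1 + 1 + 1) by ring_nf,
      show Real.cos θ ^ u = Real.cos θ ^ (u - 1 + 1) by ring_nf,
      Real.rpow_add_one hc.ne' (u - 1 + 1), Real.rpow_add_one hc.ne' (u - 1)]
    have hs := Real.sin_sq θ
    linear_combination ((u + 1) * u * Real.cos θ ^ (u - 1) * Real.cos (y * θ)) * hs

lemma cos_le_cos_mul {y θ : ℝ} (hy : 0 ≤ y) (hy1 : y ≤ 1) (hθ : θ ∈ Ioo 0 (Real.pi / 2)) :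
    Real.cos θ ≤ Real.cos (y * θ) :=
  Real.cos_le_cos_of_nonneg_of_le_pi (mul_nonneg hy hθ.1.le)
    (by linarith [hθ.2, Real.pi_pos]) (mul_le_of_le_one_left hθ.1.le hy1)

lemma cosIntegral_anti {y z u : ℝ} (hu : 0 < u) (hy : 0 ≤ y) (hyz : y ≤ z) (hz : z ≤ 1) :
    cosIntegral z u ≤ cosIntegral y u := by
  refine setIntegral_mono_on (integrableOn_cos_rpow_mul_cos z hu)
    (integrableOn_cos_rpow_mul_cos y hu) measurableSet_Ioo fun θ hθ => ?_
  refine mul_le_mul_of_nonneg_left ?_ (Real.rpow_nonneg (cos_pos_of_mem_Ioo hθ).le _)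
  refine Real.cos_le_cos_of_nonneg_of_le_pi (mul_nonneg hy hθ.1.le) ?_ ?_
  · nlinarith [hθ.1, hθ.2, Real.pi_pos]
  · exact mul_le_mul_of_nonneg_right hyz hθ.1.le

lemma cosIntegral_zero_add_two_le {z u : ℝ} (hu : 0 < u) (hz : 0 ≤ z) (hz1 : z ≤ 1) :
    cosIntegral 0 (u + 2) ≤ cosIntegral z u := by
  refine setIntegral_mono_on (integrableOn_cos_rpow_mul_cos 0 (by linarith))
    (integrableOn_cos_rpow_mul_cos z hu) measurableSet_Ioo fun θ hθ => ?_
  have hc := cos_pos_of_mem_Ioo hθ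
  have := cos_le_cos_mul hz hz1 hθ
  rw [show u + 2 - 1 = u - 1 + 1 + 1 by ring, Real.rpow_add_one hc.ne', Real.rpow_add_one hc.ne',
    zero_mul, Real.cos_zero, mul_one, mul_assoc]
  refine mul_le_mul_of_nonneg_left ?_ (Real.rpow_nonneg hc.le _)
  nlinarith [Real.cos_le_one θ]

lemma cosIntegral_pos {y u : ℝ} (hu : 0 < u) (hy : 0 ≤ y) (hy1 : y ≤ 1) : 0 < cosIntegral y u := by
  have hpos : ∀ θ ∈ Ioo 0 (Real.pi / 2), 0 < Real.cos θ ^ (u - 1) * Real.cos (y * θ) :=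
    fun θ hθ => mul_pos (Real.rpow_pos_of_pos (cos_pos_of_mem_Ioo hθ) _)
      ((cos_pos_of_mem_Ioo hθ).trans_le (cos_le_cos_mul hy hy1 hθ))
  rw [cosIntegral, setIntegral_pos_iff_support_of_nonneg_ae
    (ae_restrict_of_forall_mem measurableSet_Ioo fun θ hθ => (hpos θ hθ).le)
    (integrableOn_cos_rpow_mul_cos y hu),
    inter_eq_self_of_subset_right (t := Ioo 0 (Real.pi / 2))
      (fun θ hθ => Function.mem_support.2 (hpos θ hθ).ne'), Real.volume_Ioo]
  simp [Real.pi_pos]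

lemma cosIntegral_le_mul {y z u : ℝ} (hu : 0 < u) (hy : 0 ≤ y) (hy1 : y ≤ 1) (hz : 0 ≤ z)
    (hz1 : z ≤ 1) : cosIntegral y u ≤ (1 + 1 / u) * cosIntegral z u := by
  have h0 := cosIntegral_add_two 0 hu
  have h1 : cosIntegral 0 u = (1 + 1 / u) * cosIntegral 0 (u + 2) := by
    field_simp
    nlinarith
  calc cosIntegral y u ≤ cosIntegral 0 u := cosIntegral_anti hu le_rfl hy hy1
    _ = (1 + 1 / u) * cosIntegral 0 (u + 2) := h1
    _ ≤ _ := mul_le_mul_of_nonneg_left (cosIntegral_zero_add_two_le hu hz hz1) (by positivity)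

lemma tendsto_cosIntegral_div {y z : ℝ} (hy : 0 ≤ y) (hyz : y ≤ z) (hz : z ≤ 1) :
    Tendsto (fun u => cosIntegral y u / cosIntegral z u) atTop (𝓝 1) := by
  have hlim : Tendsto (fun u : ℝ => 1 + 1 / u) atTop (𝓝 1) := by
    simpa using (tendsto_inv_atTop_zero (𝕜 := ℝ)).const_add 1
  refine tendsto_of_tendsto_of_tendsto_of_le_of_le' tendsto_const_nhds hlim ?_ ?_
  · filter_upwards [eventually_gt_atTop 0] with u hu
    rw [one_le_div (cosIntegral_pos hu (hy.trans hyz) hz)]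
    exact cosIntegral_anti hu hy hyz hz
  · filter_upwards [eventually_gt_atTop 0] with u hu
    rw [div_le_iff₀ (cosIntegral_pos hu (hy.trans hyz) hz)]
    exact cosIntegral_le_mul hu hy (hyz.trans hz) (hy.trans hyz) hz

lemma cosIntegral_div_eq {y z u : ℝ} (hu : 0 < u) (hy : 0 ≤ y) (hyz : y ≤ z) (hz : z ≤ 1) (n : ℕ) :
    cosIntegral y u / cosIntegral z u =
      cosIntegral y (u + 2 * n) / cosIntegral z (u + 2 * n) *
      (poch ((u + 1) / 2 - y / 2) n * poch ((u + 1) / 2 + y / 2) n /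
        (poch ((u + 1) / 2 - z / 2) n * poch ((u + 1) / 2 + z / 2) n)) := by
  induction n with
  | zero => simp [poch]
  | succ n ih =>
    have hn : 0 < u + 2 * n := by positivity
    have ry := cosIntegral_add_two y hn
    have rz := cosIntegral_add_two z hn
    have p1 := cosIntegral_pos hn hy (hyz.trans hz)
    have p2 := cosIntegral_pos hn (hy.trans hyz) hz
    have hn2 : u + 2 * ((n + 1 : ℕ) : ℝ) = u + 2 * n + 2 := by push_cast; ring
    have p3 := cosIntegral_pos (by linarith : 0 < u + 2 * n + 2) hy (hyz.trans hz)
    have p4 := cosIntegral_pos (by linarith : 0 < u + 2 * n + 2) (hy.trans hyz) hz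
    have q1 := poch_pos (by linarith : 0 < (u + 1) / 2 - z / 2) n
    have q2 := poch_pos (by linarith : 0 < (u + 1) / 2 + z / 2) n
    have r1 : 0 < (u + 1) / 2 - z / 2 + n := by linarith
    have r2 : 0 < (u + 1) / 2 + z / 2 + n := by linarith
    have step : cosIntegral y (u + 2 * n) / cosIntegral z (u + 2 * n) =
        cosIntegral y (u + 2 * n + 2) / cosIntegral z (u + 2 * n + 2) *
        ((((u + 1) / 2 - y / 2 + n) * ((u + 1) / 2 + y / 2 + n)) /
          (((u + 1) / 2 - z / 2 + n) * ((u + 1) / 2 + z / 2 + n))) := by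
      rw [div_mul_div_comm, div_eq_div_iff p2.ne' (by positivity)]
      refine mul_left_cancel₀ (by positivity : (u + 2 * n + 1) * (u + 2 * n) ≠ 0) ?_
      linear_combination (-(cosIntegral z (u + 2 * n + 2)) *
        ((u + 1) / 2 - z / 2 + n) * ((u + 1) / 2 + z / 2 + n)) * ry +
        (cosIntegral y (u + 2 * n + 2) *
          ((u + 1) / 2 - y / 2 + n) * ((u + 1) / 2 + y / 2 + n)) * rz
    rw [ih, hn2, step, poch_succ, poch_succ, poch_succ, poch_succ]
    field_simp

/-- Cauchy's cosine integrals, in the form of a quotient. -/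
lemma cosIntegral_div_eq_Gamma {y z u : ℝ} (hu : 0 < u) (hy : 0 ≤ y) (hyz : y ≤ z) (hz : z ≤ 1) :
    cosIntegral y u / cosIntegral z u =
      Real.Gamma ((u + 1) / 2 - z / 2) * Real.Gamma ((u + 1) / 2 + z / 2) /
        (Real.Gamma ((u + 1) / 2 - y / 2) * Real.Gamma ((u + 1) / 2 + y / 2)) := by
  set p := (u + 1) / 2 with hp
  have G1 := Real.Gamma_pos_of_pos (by linarith : 0 < p - y / 2)
  have G2 := Real.Gamma_pos_of_pos (by linarith : 0 < p + y / 2)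
  have hlim : Tendsto (fun n : ℕ => cosIntegral y (u + 2 * (n + 1 : ℕ)) /
      cosIntegral z (u + 2 * (n + 1 : ℕ)) *
      (Real.GammaSeq (p - z / 2) n * Real.GammaSeq (p + z / 2) n /
        (Real.GammaSeq (p - y / 2) n * Real.GammaSeq (p + y / 2) n))) atTop
      (𝓝 (1 * (Real.Gamma (p - z / 2) * Real.Gamma (p + z / 2) /
        (Real.Gamma (p - y / 2) * Real.Gamma (p + y / 2))))) := by
    refine Tendsto.mul ?_ (Tendsto.div
      ((Real.GammaSeq_tendsto_Gamma _).mul (Real.GammaSeq_tendsto_Gamma _))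
      ((Real.GammaSeq_tendsto_Gamma _).mul (Real.GammaSeq_tendsto_Gamma _)) (by positivity))
    refine (tendsto_cosIntegral_div hy hyz hz).comp (tendsto_atTop_add_const_left _ _ ?_)
    exact (tendsto_natCast_atTop_atTop.comp (tendsto_add_atTop_nat 1)).const_mul_atTop two_pos
  rw [one_mul] at hlim
  refine tendsto_nhds_unique (tendsto_const_nhds.congr' ?_) hlim
  filter_upwards [eventually_gt_atTop 0] with n hn
  rw [cosIntegral_div_eq hu hy hyz hz (n + 1)]
  congr 1
  have hn' : (0 : ℝ) < n := Nat.cast_pos.2 hn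
  have q1 := poch_pos (by linarith : 0 < p - z / 2) (n + 1)
  have q2 := poch_pos (by linarith : 0 < p + z / 2) (n + 1)
  have q3 := poch_pos (by linarith : 0 < p - y / 2) (n + 1)
  have q4 := poch_pos (by linarith : 0 < p + y / 2) (n + 1)
  have hG (s : ℝ) : Real.GammaSeq s n = n ^ s * n.factorial / poch s (n + 1) := rfl
  have hpow : (n : ℝ) ^ (p - z / 2) * (n : ℝ) ^ (p + z / 2) =
      (n : ℝ) ^ (p - y / 2) * (n : ℝ) ^ (p + y / 2) := by
    rw [← Real.rpow_add hn', ← Real.rpow_add hn']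
    ring_nf
  rw [← hp, hG, hG, hG, hG, div_mul_div_comm, div_mul_div_comm, div_div_div_eq,
    div_eq_div_iff (by positivity) (by positivity)]
  linear_combination (-(poch (p - y / 2) (n + 1) * poch (p + y / 2) (n + 1) *
    (poch (p - z / 2) (n + 1) * poch (p + z / 2) (n + 1)) * n.factorial ^ 2)) * hpow

lemma StrictAntiOn.image_Ioo_eq {f : ℝ → ℝ} {a b : ℝ} (hab : a ≤ b)
    (hf : StrictAntiOn f (Icc a b)) (hc : ContinuousOn f (Icc a b)) :
    f '' Ioo a b = Ioo (f b) (f a) := by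
  refine Subset.antisymm ?_ (intermediate_value_Ioo' hab hc)
  rintro _ ⟨x, hx, rfl⟩
  have hx' := Ioo_subset_Icc_self hx
  exact ⟨hf hx' (right_mem_Icc.2 hab) hx.2, hf (left_mem_Icc.2 hab) hx' hx.1⟩

lemma mul_sq_rpow_neg_half {M x : ℝ} (hM : 0 < M) (hx : 0 < x) :
    (M * x ^ 2) ^ ((1 / 2 : ℝ) - 1) = 1 / (Real.sqrt M * x) := by
  rw [show (1 / 2 : ℝ) - 1 = -(1 / 2) by norm_num, Real.rpow_neg (by positivity),
    ← Real.sqrt_eq_rpow, Real.sqrt_mul hM.le, Real.sqrt_sq hx.le, one_div]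

lemma beta_half_eq_cosIntegral {u : ℝ} (hu : 0 < u) :
    ProbabilityTheory.beta u (1 / 2) = Real.sqrt 2 * cosIntegral (1 / 2) u := by
  have hpi := Real.pi_pos
  have hanti : StrictAntiOn Real.cos (Icc 0 (Real.pi / 2)) :=
    Real.strictAntiOn_cos.mono (Icc_subset_Icc_right (by linarith))
  have himg := hanti.image_Ioo_eq (by positivity) Real.continuous_cos.continuousOn
  rw [Real.cos_pi_div_two, Real.cos_zero] at himg
  rw [← integral_Ioo_rpow_mul_rpow hu one_half_pos, ← himg,
    integral_image_eq_integral_abs_deriv_smul measurableSet_Ioo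
      (fun θ _ => (Real.hasDerivAt_cos θ).hasDerivWithinAt)
      (hanti.injOn.mono Ioo_subset_Icc_self), cosIntegral, ← integral_const_mul]
  refine setIntegral_congr_fun measurableSet_Ioo fun θ hθ => ?_
  have hs : 0 < Real.sin (θ / 2) :=
    Real.sin_pos_of_pos_of_lt_pi (by linarith [hθ.1]) (by linarith [hθ.2])
  have hs' : 0 < Real.sin θ := Real.sin_pos_of_pos_of_lt_pi hθ.1 (by linarith [hθ.2])
  have e1 : Real.sin θ = 2 * Real.sin (θ / 2) * Real.cos (θ / 2) := by
    rw [← Real.sin_two_mul]; ring_nf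
  have e2 : 1 - Real.cos θ = 2 * Real.sin (θ / 2) ^ 2 := by
    rw [← Real.cos_sq_add_sin_sq (θ / 2), show Real.cos θ = Real.cos (2 * (θ / 2)) by ring_nf,
      Real.cos_two_mul]
    linarith [Real.cos_sq_add_sin_sq (θ / 2)]
  have h2 : Real.sqrt 2 ^ 2 = 2 := Real.sq_sqrt two_pos.le
  simp only [smul_eq_mul]
  rw [abs_neg, abs_of_pos hs', e2, mul_sq_rpow_neg_half two_pos hs, e1,
    show 1 / 2 * θ = θ / 2 by ring]
  field_simp
  rw [h2]
  ring

lemma integral_eq_cosIntegral_quarter (u : ℝ) :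
    ∫ t in Ioo (0 : ℝ) 1, t ^ (u - 1) * (1 - t) ^ ((1 / 2 : ℝ) - 1) *
        (1 - (1 - Real.sqrt 2) / 2 * t) ^ (u - 1) =
      ((Real.sqrt 2 + 1) / 2) ^ (u - 1) * (Real.sqrt 2 * (Real.sqrt 2 + 1) /
        Real.sqrt (2 * Real.sqrt 2 * (Real.sqrt 2 + 1))) * cosIntegral (1 / 4) u := by
  have hpi := Real.pi_pos
  set s := Real.sqrt 2 with hs_def
  have h2 : s ^ 2 = 2 := Real.sq_sqrt two_pos.le
  have hs1 : 1 < s := Real.one_lt_sqrt_two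
  have hs0 : 0 < s := by linarith
  set f : ℝ → ℝ := fun θ => (s + 1) * (s * Real.cos (θ / 2) - 1) with hf
  have hanti : StrictAntiOn f (Icc 0 (Real.pi / 2)) := fun x hx y hy hxy => by
    have := Real.strictAntiOn_cos (a := x / 2) (b := y / 2)
      ⟨by linarith [hx.1], by linarith [hx.2]⟩ ⟨by linarith [hy.1], by linarith [hy.2]⟩
      (by linarith)
    simp only [hf]
    gcongr
  have himg := hanti.image_Ioo_eq (by positivity) (Continuous.continuousOn (by fun_prop))
  have f0 : f 0 = 1 := by
    simp only [hf, zero_div, Real.cos_zero]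
    linear_combination h2
  have f1 : f (Real.pi / 2) = 0 := by
    simp only [hf, show Real.pi / 2 / 2 = Real.pi / 4 by ring, Real.cos_pi_div_four]
    linear_combination (s + 1) / 2 * h2
  rw [f0, f1] at himg
  have hder (θ : ℝ) : HasDerivAt f ((s + 1) * (s * (-Real.sin (θ / 2) * (1 / 2)))) θ :=
    (((((hasDerivAt_id θ).div_const 2).cos).const_mul s).sub_const 1).const_mul (s + 1)
  rw [← himg, integral_image_eq_integral_abs_deriv_smul measurableSet_Ioo
      (fun θ _ => (hder θ).hasDerivWithinAt)
      (hanti.injOn.mono Ioo_subset_Icc_self), cosIntegral, ← integral_const_mul]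
  refine setIntegral_congr_fun measurableSet_Ioo fun θ hθ => ?_
  have hc := cos_pos_of_mem_Ioo hθ
  have hft : f θ ∈ Ioo 0 1 := himg ▸ mem_image_of_mem f hθ
  have hs4 : 0 < Real.sin (θ / 4) :=
    Real.sin_pos_of_pos_of_lt_pi (by linarith [hθ.1]) (by linarith [hθ.2])
  have hs2 : 0 < Real.sin (θ / 2) :=
    Real.sin_pos_of_pos_of_lt_pi (by linarith [hθ.1]) (by linarith [hθ.2])
  have e1 : Real.sin (θ / 2) = 2 * Real.sin (θ / 4) * Real.cos (θ / 4) := by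
    rw [← Real.sin_two_mul]; ring_nf
  have e2 : Real.cos (θ / 2) = 1 - 2 * Real.sin (θ / 4) ^ 2 := by
    rw [show θ / 2 = 2 * (θ / 4) by ring, Real.cos_two_mul]
    linarith [Real.cos_sq_add_sin_sq (θ / 4)]
  have e3 : Real.cos θ = 2 * Real.cos (θ / 2) ^ 2 - 1 := by
    rw [← Real.cos_two_mul]; ring_nf
  have e4 : 1 - f θ = 2 * s * (s + 1) * Real.sin (θ / 4) ^ 2 := by
    simp only [hf, e2]
    linear_combination -h2
  have e5 : f θ * (1 - (1 - s) / 2 * f θ) = (s + 1) / 2 * Real.cos θ := by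
    simp only [hf, e3]
    set c := Real.cos (θ / 2)
    grind
  have hw : 0 ≤ 1 - (1 - s) / 2 * f θ := by nlinarith [hft.1]
  have e6 : f θ ^ (u - 1) * (1 - (1 - s) / 2 * f θ) ^ (u - 1) =
      ((s + 1) / 2) ^ (u - 1) * Real.cos θ ^ (u - 1) := by
    rw [← Real.mul_rpow hft.1.le hw, e5, Real.mul_rpow (by positivity) hc.le]
  have e7 : |(s + 1) * (s * (-Real.sin (θ / 2) * (1 / 2)))| =
      (s + 1) * s * (Real.sin (θ / 4) * Real.cos (θ / 4)) := by
    rw [show (s + 1) * (s * (-Real.sin (θ / 2) * (1 / 2))) =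
      -((s + 1) * s * Real.sin (θ / 2) / 2) by ring, abs_neg, abs_of_pos (by positivity), e1]
    ring
  simp only [smul_eq_mul]
  rw [mul_right_comm (f θ ^ (u - 1)), e6, e7, e4, mul_sq_rpow_neg_half (by positivity) hs4,
    show 1 / 4 * θ = θ / 4 by ring]
  field_simp

lemma sqrt_two_constant (a : ℝ) :
    ((Real.sqrt 2 + 1) / 2) ^ (-(a + 1 / 2)) * (Real.sqrt 2 * (Real.sqrt 2 + 1) /
        Real.sqrt (2 * Real.sqrt 2 * (Real.sqrt 2 + 1))) / Real.sqrt 2 * (2 : ℝ) ^ a =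
      2 ^ (2 * a - 1 / 4) * (Real.sqrt 2 - 1) ^ a := by
  have hs1 : 1 < Real.sqrt 2 := Real.one_lt_sqrt_two
  have hs0 : 0 < Real.sqrt 2 := by linarith
  have h2 : Real.sqrt 2 ^ 2 = 2 := Real.sq_sqrt two_pos.le
  have hL : 0 < Real.sqrt 2 - 1 := by linarith
  have h1 : Real.sqrt 2 + 1 = (Real.sqrt 2 - 1)⁻¹ :=
    eq_inv_of_mul_eq_one_left (by linear_combination h2)
  apply Real.log_injOn_pos (mem_Ioi.2 (by positivity)) (mem_Ioi.2 (by positivity))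
  have hl : Real.log (Real.sqrt 2 + 1) = -Real.log (Real.sqrt 2 - 1) := by rw [h1, Real.log_inv]
  have hp : 0 < Real.sqrt 2 + 1 := by linarith
  rw [Real.log_mul (by positivity) (by positivity), Real.log_div (by positivity) (by positivity),
    Real.log_mul (by positivity) (by positivity), Real.log_div (by positivity) (by positivity),
    Real.log_mul (by positivity) (by positivity), Real.log_mul (by positivity) (by positivity),
    Real.log_rpow (by positivity), Real.log_rpow two_pos, Real.log_rpow two_pos,
    Real.log_rpow hL, Real.log_div (by positivity) (by positivity),
    Real.log_sqrt (x := 2 * Real.sqrt 2 * (Real.sqrt 2 + 1)) (by positivity),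
    Real.log_mul (by positivity) (by positivity), Real.log_mul (by positivity) (by positivity),
    Real.log_sqrt (x := 2) two_pos.le, hl]
  ring

theorem twoF1_K2_value (a : ℝ) (ha : a < 1/2) :
    ∑' n : ℕ,
        poch (a + 1/2) n * poch (1/2 - a) n / (poch (1 - a) n * (Nat.factorial n))
          * ((1 - Real.sqrt 2)/2) ^ n =
      Real.sqrt Real.pi * (2 : ℝ) ^ (2*a - 1/4) * (Real.sqrt 2 - 1) ^ a
          * Real.Gamma (1 - a)
        / (Real.Gamma (5/8 - a/2) * Real.Gamma (7/8 - a/2)) := by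
  have hu : 0 < 1 / 2 - a := by linarith
  have hs1 : 1 < Real.sqrt 2 := Real.one_lt_sqrt_two
  have hs0 : 0 < Real.sqrt 2 := by linarith
  have h2 : Real.sqrt 2 ^ 2 = 2 := Real.sq_sqrt two_pos.le
  have hw : |(1 - Real.sqrt 2) / 2| < 1 := by
    rw [abs_lt]
    constructor <;> nlinarith
  have hsum := (hasSum_hypergeometric_mul_beta (a + 1 / 2) hu one_half_pos hw).tsum_eq
  have hI := integral_eq_cosIntegral_quarter (1 / 2 - a)
  have hQ := cosIntegral_div_eq_Gamma hu (y := 1 / 4) (z := 1 / 2) (by norm_num) (by norm_num)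
    (by norm_num)
  have hJ := cosIntegral_pos hu (y := 1 / 2) (by norm_num) (by norm_num)
  have hdup := Real.Gamma_mul_Gamma_add_half ((1 - a) / 2)
  rw [show 2 * ((1 - a) / 2) = 1 - a by ring, show 1 - (1 - a) = a by ring] at hdup
  rw [show (1 / 2 - a + 1) / 2 - 1 / 2 / 2 = (1 - a) / 2 by ring,
    show (1 / 2 - a + 1) / 2 + 1 / 2 / 2 = (1 - a) / 2 + 1 / 2 by ring, hdup,
    show (1 / 2 - a + 1) / 2 - 1 / 4 / 2 = 5 / 8 - a / 2 by ring,
    show (1 / 2 - a + 1) / 2 + 1 / 4 / 2 = 7 / 8 - a / 2 by ring, div_eq_iff hJ.ne'] at hQ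
  rw [show 1 / 2 - a - 1 = -(a + 1 / 2) by ring, hQ] at hI
  rw [show 1 / 2 - a - 1 = -(a + 1 / 2) by ring, hI, tsum_mul_right,
    beta_half_eq_cosIntegral hu, show 1 / 2 - a + 1 / 2 = 1 - a by ring,
    ← eq_div_iff (by positivity)] at hsum
  rw [hsum, mul_assoc (Real.sqrt Real.pi), ← sqrt_two_constant a]
  generalize cosIntegral (1 / 2) (1 / 2 - a) = J at hJ ⊢
  field_simp
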